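/- With the notation and hypotheses of the context (in particular τ(x₀, m₀) = 0 and γ·μ ≠ 0), one has the three-term product identity τ(x₀, m₀ + 1)·τ(x₀ − η, m₀)·τ(x₀ + η, m₀ − 1) = −τ(x₀ − η, m₀ + 1)·τ(x₀, m₀ − 1)·τ(x₀ + η, m₀). -/

import Mathlib

open Matrix

theorem aux_det_add_vecMulVec {n : ℕ} (A : Matrix (Fin n) (Fin n) ℂ) (u v : Fin n → ℂ) :
    (A + vecMulVec u v).det = A.det + v ⬝ᵥ (A.adjugate *ᵥ u) := by
  have key : ∀ M : Matrix (Fin n) (Fin n) ℂ, M.det ≠ 0 →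
      (M + vecMulVec u v).det = M.det + v ⬝ᵥ (M.adjugate *ᵥ u) := by
    intro M hM
    have hU : IsUnit M.det := isUnit_iff_ne_zero.mpr hM
    have h := det_add_replicateCol_mul_replicateRow (ι := Unit) hU u v
    have h1 : replicateCol Unit u * replicateRow Unit v = vecMulVec u v := by
      ext i j; simp [Matrix.mul_apply, vecMulVec_apply]
    have h2 : (1 + replicateRow Unit v * M⁻¹ * replicateCol Unit u).det
        = 1 + v ⬝ᵥ (M⁻¹ *ᵥ u) := by
      rw [det_unique, Matrix.mul_assoc]
      simp [Matrix.mul_apply, dotProduct, mulVec]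
    rw [h1, h2] at h
    rw [h, Matrix.inv_def, smul_mulVec, dotProduct_smul, Ring.inverse_eq_inv', smul_eq_mul]
    field_simp
  have hc : (fun t : ℂ => ((A + t • 1) + vecMulVec u v).det) =
      fun t : ℂ => (A + t • 1).det + v ⬝ᵥ ((A + t • 1).adjugate *ᵥ u) := by
    have hfin : {t : ℂ | (A + t • (1 : Matrix (Fin n) (Fin n) ℂ)).det = 0}.Finite := by
      refine (Polynomial.finite_setOfPred_isRoot (Matrix.charpoly_monic (-A)).ne_zero).subset ?_
      intro t ht
      simp only [Set.mem_ofPred_eq] at ht ⊢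
      rw [Polynomial.IsRoot, Matrix.eval_charpoly, ← ht]
      congr 1
      rw [sub_neg_eq_add, add_comm, Matrix.smul_one_eq_diagonal]
      rfl
    refine Continuous.ext_on (hfin.countable.dense_compl ℂ) ?_ ?_ ?_
    · fun_prop
    · fun_prop
    · intro t ht
      exact key _ ht
  simpa using congrFun hc 0

theorem aux_main {n : ℕ} (X P Q : Matrix (Fin n) (Fin n) ℂ) (e f v w : Fin n → ℂ) (s : ℂ)
    (hX : X.det = 0) (hvw : X.adjugate = vecMulVec v w) :
    (P * X * Q + s • vecMulVec e f).det =
      s * (f ⬝ᵥ (Q.adjugate *ᵥ v)) * (w ⬝ᵥ (P.adjugate *ᵥ e)) := by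
  rw [← smul_vecMulVec, aux_det_add_vecMulVec, det_mul, det_mul, hX, adjugate_mul_distrib,
    adjugate_mul_distrib, hvw]
  rw [← mulVec_mulVec, ← mulVec_mulVec, vecMulVec_mulVec, mulVec_smul, mulVec_smul]
  simp
  ring

/-- three-term product identity `τ(x₀, m₀+1)·τ(x₀−η, m₀)·τ(x₀+η, m₀−1) = −τ(x₀−η, m₀+1)·τ(x₀, m₀−1)·τ(x₀+η, m₀)`. -/
theorem tau_three_term_product (n : ℕ) (hn : 1 ≤ n)
    (X Z : Matrix (Fin n) (Fin n) ℂ)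
    (hrank : (X * Z - Z * X + 1).rank = 1)
    (η : ℂ) (hη : η ≠ 0)
    (lam₁ lam₂ : ℂ)
    (hlam₁ : lam₁ ∉ spectrum ℂ Z) (hlam₂ : lam₂ ∉ spectrum ℂ Z)
    (τ : ℂ → ℂ → ℂ)
    (hτ : ∀ x m : ℂ, τ x m =
      (X + (x / η) • (lam₁ • (1 : Matrix (Fin n) (Fin n) ℂ) - Z)⁻¹ +
        m • (lam₂ • (1 : Matrix (Fin n) (Fin n) ℂ) - Z)⁻¹).det)
    (x₀ m₀ : ℂ) (hroot : τ x₀ m₀ = 0)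
    (X' : Matrix (Fin n) (Fin n) ℂ)
    (hX' : X' = X + (x₀ / η) • (lam₁ • (1 : Matrix (Fin n) (Fin n) ℂ) - Z)⁻¹ +
        m₀ • (lam₂ • (1 : Matrix (Fin n) (Fin n) ℂ) - Z)⁻¹)
    (hrank' : (X' * Z - Z * X' + 1).rank = 1)
    (e f v w : Fin n → ℂ)
    (hef : X' * Z - Z * X' + 1 = vecMulVec e f)
    (hvw : X'.adjugate = vecMulVec v w)
    (hγμ : (w ⬝ᵥ e) * (f ⬝ᵥ v) ≠ 0) :
    τ x₀ (m₀ + 1) * τ (x₀ - η) m₀ * τ (x₀ + η) (m₀ - 1) =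
      -(τ (x₀ - η) (m₀ + 1) * τ x₀ (m₀ - 1) * τ (x₀ + η) m₀) := by
  have hdX : X'.det = 0 := by rw [hX', ← hτ]; exact hroot
  set A : Matrix (Fin n) (Fin n) ℂ := lam₁ • (1 : Matrix (Fin n) (Fin n) ℂ) - Z with hA
  set B : Matrix (Fin n) (Fin n) ℂ := lam₂ • (1 : Matrix (Fin n) (Fin n) ℂ) - Z with hB
  have hdA : IsUnit A.det := by
    rw [← Matrix.isUnit_iff_isUnit_det]
    simpa [spectrum.mem_iff, Algebra.algebraMap_eq_smul_one] using hlam₁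
  have hdB : IsUnit B.det := by
    rw [← Matrix.isUnit_iff_isUnit_det]
    simpa [spectrum.mem_iff, Algebra.algebraMap_eq_smul_one] using hlam₂
  have hAi : A * A⁻¹ = 1 := Matrix.mul_nonsing_inv A hdA
  have hAi' : A⁻¹ * A = 1 := Matrix.nonsing_inv_mul A hdA
  have hBi : B * B⁻¹ = 1 := Matrix.mul_nonsing_inv B hdB
  have hBi' : B⁻¹ * B = 1 := Matrix.nonsing_inv_mul B hdB
  have hXA : X' * A = A * X' + 1 - vecMulVec e f := by
    rw [← hef, hA]
    simp only [mul_sub, sub_mul, mul_smul_comm, smul_mul_assoc, mul_one, one_mul]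
    abel
  have hXB : X' * B = B * X' + 1 - vecMulVec e f := by
    rw [← hef, hB]
    simp only [mul_sub, sub_mul, mul_smul_comm, smul_mul_assoc, mul_one, one_mul]
    abel
  have hBA : B = A + (lam₂ - lam₁) • (1 : Matrix (Fin n) (Fin n) ℂ) := by
    rw [hA, hB, sub_smul]; abel
  have hτ' : ∀ a b : ℂ, τ (x₀ + a * η) (m₀ + b) = (X' + a • A⁻¹ + b • B⁻¹).det := by
    intro a b
    rw [hτ, hX', add_div, mul_div_cancel_right₀ _ hη, add_smul, add_smul]
    congr 1
    abel
  clear_value A B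
  -- single shifts, for a matrix C with the same commutation relation
  have plus : ∀ C : Matrix (Fin n) (Fin n) ℂ, C * C⁻¹ = 1 →
      X' * C = C * X' + 1 - vecMulVec e f →
      C.det * (X' + C⁻¹).det = (f ⬝ᵥ (C.adjugate *ᵥ v)) * (w ⬝ᵥ e) := by
    intro C hC h
    have := aux_main X' 1 C e f v w 1 hdX hvw
    simp only [one_mul, one_smul, adjugate_one, one_mulVec] at this
    rw [← this, ← det_mul, mul_add, hC, h]
    congr 1
    abel
  have minus : ∀ C : Matrix (Fin n) (Fin n) ℂ, C⁻¹ * C = 1 →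
      X' * C = C * X' + 1 - vecMulVec e f →
      (X' - C⁻¹).det * C.det = - ((f ⬝ᵥ v) * (w ⬝ᵥ (C.adjugate *ᵥ e))) := by
    intro C hC h
    have := aux_main X' C 1 e f v w (-1) hdX hvw
    simp only [mul_one, adjugate_one, one_mulVec] at this
    rw [neg_mul, neg_mul, one_mul] at this
    rw [← this, ← det_mul, sub_mul, hC, h, neg_smul, one_smul]
    congr 1
    abel
  have mixed : ∀ (C D : Matrix (Fin n) (Fin n) ℂ) (c : ℂ), C * C⁻¹ = 1 → D⁻¹ * D = 1 →
      X' * C = C * X' + 1 - vecMulVec e f → X' * D = D * X' + 1 - vecMulVec e f →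
      D = C + c • (1 : Matrix (Fin n) (Fin n) ℂ) →
      C.det * (X' + C⁻¹ - D⁻¹).det * D.det =
        c * (f ⬝ᵥ (C.adjugate *ᵥ v)) * (w ⬝ᵥ (D.adjugate *ᵥ e)) := by
    intro C D c hC hD h1 h2 hDC
    rw [← aux_main X' D C e f v w c hdX hvw, ← det_mul, ← det_mul]
    congr 1
    have e1 : C * (X' + C⁻¹ - D⁻¹) * D = C * X' * D + D - C := by
      rw [mul_sub, mul_add, hC, sub_mul, add_mul, mul_assoc C D⁻¹, hD]
      simp
    have e2 : C * X' = X' * C - 1 + vecMulVec e f := by rw [h1]; abel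
    have e3 : D * X' = X' * D - 1 + vecMulVec e f := by rw [h2]; abel
    rw [e1, e2, e3, hDC]
    simp only [mul_add, add_mul, sub_mul, smul_add, smul_sub, mul_smul_comm, smul_mul_assoc, mul_one, one_mul]
    abel
  have t1 := hτ' 0 1
  have t2 := hτ' (-1) 0
  have t3 := hτ' 1 (-1)
  have t4 := hτ' (-1) 1
  have t5 := hτ' 0 (-1)
  have t6 := hτ' 1 0
  simp only [zero_mul, one_mul, neg_mul, add_zero, zero_smul, one_smul, neg_smul,
    ← sub_eq_add_neg] at t1 t2 t3 t4 t5 t6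
  rw [t1, t2, t3, t4, t5, t6]
  have p1 := plus B hBi hXB
  have p2 := minus A hAi' hXA
  have p3 := mixed A B _ hAi hBi' hXA hXB hBA
  have p4 := mixed B A (lam₁ - lam₂) hBi hAi' hXB hXA (by
    rw [hBA, add_assoc, ← add_smul]; simp)
  have p5 := minus B hBi' hXB
  have p6 := plus A hAi hXA
  rw [show X' + B⁻¹ - A⁻¹ = X' - A⁻¹ + B⁻¹ by abel] at p4
  have ha := hdA.ne_zero
  have hb := hdB.ne_zero
  generalize (X' + B⁻¹).det = T1 at *
  generalize (X' - A⁻¹).det = T2 at *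
  generalize (X' + A⁻¹ - B⁻¹).det = T3 at *
  generalize (X' - A⁻¹ + B⁻¹).det = T4 at *
  generalize (X' - B⁻¹).det = T5 at *
  generalize (X' + A⁻¹).det = T6 at *
  have hab : (A.det * B.det) ^ 2 ≠ 0 := pow_ne_zero _ (mul_ne_zero ha hb)
  apply mul_left_cancel₀ hab
  have l : (A.det * B.det) ^ 2 * (T1 * T2 * T3) =
      (B.det * T1) * (T2 * A.det) * (A.det * T3 * B.det) := by ring
  have r : (A.det * B.det) ^ 2 * -(T4 * T5 * T6) =
      -((B.det * T4 * A.det) * (T5 * B.det) * (A.det * T6)) := by ring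
  rw [l, r, p1, p2, p3, p4, p5, p6]
  ring
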